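/- arXiv:2005.00977 — 2 statements merged into one kernel-verified Lean document; each statement's English description precedes it below -/
import Mathlib

section
/- Let Ω be a domain in ℂⁿ (n ≥ 2), 0 < r ≤ 1, and let p ∈ ∂Ω be a (P,r)-extreme point, witnessed by the holomorphic embedding f. Then for every 0 < r' < r and every c > 0 there exist ε₀ > 0 and γ₀ > 0 such that σ_Ω(q) > γ₀ for all q ∈ Γ(r',c) ∩ B(p;ε₀). -/
open Complex Metric Set

noncomputable section

/-- `ℂⁿ` with `n = N + 1`, carrying the Euclidean norm; points are written `z = (z', z_n)`
with `z' ∈ ℂᴺ` the first `N` coordinates and `z_n` the last coordinate. -/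
abbrev CSp (N : ℕ) : Type := EuclideanSpace ℂ (Fin (N + 1))

variable {N : ℕ}

/-- The last coordinate `z_n` of `z = (z', z_n)`. -/
def lastC (z : CSp N) : ℂ := z (Fin.last N)

/-- The first `N` coordinates `z'` of `z = (z', z_n)`. -/
def initC (z : CSp N) : Fin N → ℂ := fun j => z j.castSucc

/-- The point `(z', z_n) ∈ ℂⁿ`. -/
def mkPt (z' : Fin N → ℂ) (zn : ℂ) : CSp N := WithLp.toLp 2 (Fin.snoc z' zn)

/-- The weight `wt(K) = Σ_j k_j / (2 m_j)` of a multi-index `K` with respect to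
`Λ = (1/m₁, …, 1/m_N)`. -/
def wt (m : Fin N → ℕ) (K : Fin N → ℕ) : ℝ := ∑ j, (K j : ℝ) / (2 * m j)

/-- `P` is a real-valued weighted homogeneous polynomial of the form
`P(z') = Σ_{wt(K)=wt(L)=1/2} a_{KL} z'^K conj(z')^L` with `a_{KL} = conj (a_{LK})`. -/
def IsWHP (m : Fin N → ℕ) (P : (Fin N → ℂ) → ℝ) : Prop :=
  ∃ a : (Fin N → ℕ) → (Fin N → ℕ) → ℂ,
    {q : (Fin N → ℕ) × (Fin N → ℕ) | a q.1 q.2 ≠ 0}.Finite ∧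
    (∀ K L, a K L = starRingEnd ℂ (a L K)) ∧
    (∀ K L, a K L ≠ 0 → wt m K = 1 / 2 ∧ wt m L = 1 / 2) ∧
    (∀ z' : Fin N → ℂ, (P z' : ℂ) =
      ∑ᶠ K, ∑ᶠ L, a K L * (∏ j, z' j ^ K j) * ∏ j, starRingEnd ℂ (z' j) ^ L j)

/-- The model `E_P = {(z',z_n) : P(z') < 2 Re z_n}`. -/
def EP (P : (Fin N → ℂ) → ℝ) : Set (CSp N) :=
  {z | P (initC z) < 2 * (lastC z).re}

/-- `D(r) = {(z',z_n) : |z_n - r|² + P(z') < r²}`. -/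
def Dball (P : (Fin N → ℂ) → ℝ) (r : ℝ) : Set (CSp N) :=
  {z | ‖lastC z - (r : ℂ)‖ ^ 2 + P (initC z) < r ^ 2}

/-- The squeezing function `σ_Ω(p)`: the supremum of all `r > 0` such that some holomorphic
embedding `f : Ω → 𝔹ⁿ` with `f p = 0` satisfies `B(0;r) ⊆ f(Ω)`. -/
def sqf {n : ℕ} (Ω : Set (EuclideanSpace ℂ (Fin n))) (p : EuclideanSpace ℂ (Fin n)) : ℝ :=
  sSup {r : ℝ | 0 < r ∧ ∃ f : EuclideanSpace ℂ (Fin n) → EuclideanSpace ℂ (Fin n),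
    DifferentiableOn ℂ f Ω ∧ InjOn f Ω ∧ f '' Ω ⊆ ball 0 1 ∧ f p = 0 ∧ ball 0 r ⊆ f '' Ω}

theorem lastC_mkPt (z' : Fin N → ℂ) (w : ℂ) : lastC (mkPt z' w) = w := by
  simp [lastC, mkPt]

theorem initC_mkPt (z' : Fin N → ℂ) (w : ℂ) : initC (mkPt z' w) = z' := by
  funext j; simp [initC, mkPt]

theorem CSp_ext {z w : CSp N} (h1 : initC z = initC w) (h2 : lastC z = lastC w) : z = w := by
  ext i
  refine Fin.lastCases ?_ (fun j => ?_) i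
  · exact h2
  · exact congrFun h1 j

theorem continuous_lastC : Continuous (lastC : CSp N → ℂ) := by
  unfold lastC; fun_prop

theorem continuous_initC : Continuous (initC : CSp N → Fin N → ℂ) := by
  unfold initC; fun_prop

theorem continuousOn_mkPt {X : Type*} [TopologicalSpace X] {s : Set X} {a : X → Fin N → ℂ}
    {b : X → ℂ} (ha : ContinuousOn a s) (hb : ContinuousOn b s) :
    ContinuousOn (fun x => mkPt (a x) (b x)) s := by
  unfold mkPt
  refine (PiLp.continuous_toLp 2 _).comp_continuousOn ?_
  rw [continuousOn_pi]
  intro i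
  refine Fin.lastCases ?_ (fun j => ?_) i
  · simpa using hb
  · simpa using (continuousOn_pi.1 ha) j

theorem differentiableOn_mkPt {s : Set (CSp N)} {a : CSp N → Fin N → ℂ}
    {b : CSp N → ℂ} (ha : ∀ j, DifferentiableOn ℂ (fun x => a x j) s)
    (hb : DifferentiableOn ℂ b s) :
    DifferentiableOn ℂ (fun x => mkPt (a x) (b x)) s := by
  rw [differentiableOn_euclidean]
  intro i
  refine Fin.lastCases ?_ (fun j => ?_) i
  · simpa [mkPt] using hb
  · simpa [mkPt] using ha j

/-- weighted dilation on the first coordinates -/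
def dl (m : Fin N → ℕ) (t : ℝ) (z' : Fin N → ℂ) : Fin N → ℂ :=
  fun j => ((t ^ (1 / (2 * (m j : ℝ))) : ℝ) : ℂ) * z' j

theorem dl_prod (m : Fin N → ℕ) {t : ℝ} (ht : 0 < t) (K : Fin N → ℕ) (z' : Fin N → ℂ) :
    ∏ j, dl m t z' j ^ K j = ((t ^ wt m K : ℝ) : ℂ) * ∏ j, z' j ^ K j := by
  unfold dl wt
  simp only [mul_pow, Finset.prod_mul_distrib]
  congr 1
  rw [Real.rpow_sum_of_pos ht]
  push_cast
  refine Finset.prod_congr rfl fun j _ => ?_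
  rw [← Complex.ofReal_pow, ← Real.rpow_natCast, ← Real.rpow_mul ht.le]
  congr 2
  ring

theorem dl_prod_conj (m : Fin N → ℕ) {t : ℝ} (ht : 0 < t) (K : Fin N → ℕ) (z' : Fin N → ℂ) :
    ∏ j, starRingEnd ℂ (dl m t z' j) ^ K j
      = ((t ^ wt m K : ℝ) : ℂ) * ∏ j, starRingEnd ℂ (z' j) ^ K j := by
  have h := congrArg (starRingEnd ℂ) (dl_prod m ht K z')
  simpa only [map_prod, map_pow, map_mul, Complex.conj_ofReal] using h

theorem P_dl {m : Fin N → ℕ} {P : (Fin N → ℂ) → ℝ} (hP : IsWHP m P) {t : ℝ} (ht : 0 < t)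
    (z' : Fin N → ℂ) : P (dl m t z') = t * P z' := by
  obtain ⟨a, -, -, hw, hsum⟩ := hP
  have h : ((P (dl m t z') : ℝ) : ℂ) = ((t * P z' : ℝ) : ℂ) := by
    rw [Complex.ofReal_mul, hsum, hsum, ← smul_eq_mul, smul_finsum]
    refine finsum_congr fun K => ?_
    rw [smul_finsum]
    refine finsum_congr fun L => ?_
    rw [dl_prod m ht, dl_prod_conj m ht]
    by_cases h0 : a K L = 0
    · simp [h0]
    · obtain ⟨h1, h2⟩ := hw K L h0
      rw [h1, h2, smul_eq_mul]
      have : ((t ^ (1/2 : ℝ) : ℝ) : ℂ) * ((t ^ (1/2 : ℝ) : ℝ) : ℂ) = (t : ℂ) := by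
        rw [← Complex.ofReal_mul, ← Real.rpow_add ht]; norm_num
      rw [← this]; ring
  exact_mod_cast h

theorem P_zero {m : Fin N → ℕ} {P : (Fin N → ℂ) → ℝ} (hP : IsWHP m P) : P 0 = 0 := by
  have h := P_dl hP (t := 2) (by norm_num) 0
  have h2 : dl m 2 (0 : Fin N → ℂ) = 0 := by funext j; simp [dl]
  rw [h2] at h; linarith

theorem P_cont {m : Fin N → ℕ} {P : (Fin N → ℂ) → ℝ} (hP : IsWHP m P) : Continuous P := by
  obtain ⟨a, hfin, -, -, hsum⟩ := hP
  set S := hfin.toFinset with hS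
  have key : ∀ z', (P z' : ℂ) = ∑ K ∈ S.image Prod.fst, ∑ L ∈ S.image Prod.snd,
      a K L * (∏ j, z' j ^ K j) * ∏ j, starRingEnd ℂ (z' j) ^ L j := by
    intro z'
    have hin : ∀ K, (∑ᶠ L, a K L * (∏ j, z' j ^ K j) * ∏ j, starRingEnd ℂ (z' j) ^ L j)
        = ∑ L ∈ S.image Prod.snd,
          a K L * (∏ j, z' j ^ K j) * ∏ j, starRingEnd ℂ (z' j) ^ L j := by
      intro K
      refine finsum_eq_sum_of_support_subset _ ?_
      intro L hL
      have h0 : a K L ≠ 0 := by intro h0; simp [h0] at hL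
      simp only [Finset.coe_image, Set.mem_image]
      exact ⟨(K, L), by simpa [hS] using h0, rfl⟩
    rw [hsum]
    simp only [hin]
    refine finsum_eq_sum_of_support_subset _ ?_
    intro K hK
    obtain ⟨L, -, hL⟩ := Finset.exists_ne_zero_of_sum_ne_zero hK
    have h0 : a K L ≠ 0 := by intro h0; simp [h0] at hL
    simp only [Finset.coe_image, Set.mem_image]
    exact ⟨(K, L), by simpa [hS] using h0, rfl⟩
  have hc : Continuous fun z' => (P z' : ℂ) := by
    simp only [key]
    fun_prop
  exact Complex.continuous_re.comp hc

theorem P_coercive {m : Fin N → ℕ} (hm : ∀ j, 0 < m j) {P : (Fin N → ℂ) → ℝ} (hP : IsWHP m P)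
    (hPpos : ∀ z' : Fin N → ℂ, z' ≠ 0 → 0 < P z') :
    ∃ μ > 0, ∀ z', ‖z'‖ ≤ 1 + μ * P z' := by
  have hnn : ∀ z', 0 ≤ P z' := fun z' => by
    by_cases h : z' = 0
    · rw [h, P_zero hP]
    · exact (hPpos z' h).le
  obtain ⟨ν, hν, hmin⟩ : ∃ ν > 0, ∀ z' ∈ sphere (0 : Fin N → ℂ) 1, ν ≤ P z' := by
    by_cases hne : (sphere (0 : Fin N → ℂ) 1).Nonempty
    · obtain ⟨x, hx, hxm⟩ := (isCompact_sphere (0 : Fin N → ℂ) 1).exists_isMinOn hne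
        (P_cont hP).continuousOn
      refine ⟨P x, hPpos x ?_, fun z hz => hxm hz⟩
      rintro rfl; simp at hx
    · exact ⟨1, one_pos, fun z hz => (hne ⟨z, hz⟩).elim⟩
  refine ⟨ν⁻¹, inv_pos.2 hν, fun z' => ?_⟩
  by_cases hz : ‖z'‖ ≤ 1
  · have := mul_nonneg (inv_pos.2 hν).le (hnn z'); linarith
  push Not at hz
  have hexp : ∀ j, (0:ℝ) < 1 / (2 * (m j : ℝ)) := fun j => by
    have : (0:ℝ) < m j := by exact_mod_cast hm j
    positivity
  have hcont : Continuous fun t : ℝ => ‖dl m t z'‖ := by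
    refine continuous_norm.comp (continuous_pi fun j => ?_)
    unfold dl
    refine (Complex.continuous_ofReal.comp ?_).mul continuous_const
    exact Real.continuous_rpow_const (hexp j).le
  have h0 : ‖dl m 0 z'‖ = 0 := by
    rw [norm_eq_zero]; funext j
    simp [dl, -one_div, Real.zero_rpow (hexp j).ne']
  have h1 : ‖dl m 1 z'‖ = ‖z'‖ := by
    congr 1; funext j; simp [dl]
  obtain ⟨t, ⟨ht0, ht1⟩, ht⟩ := intermediate_value_Icc (zero_le_one' ℝ) hcont.continuousOn
    (show (1:ℝ) ∈ Icc _ _ by simp only [h0, h1]; exact ⟨zero_le_one, hz.le⟩)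
  have htp : 0 < t := by
    rcases ht0.eq_or_lt with h | h
    · subst h; simp only [h0] at ht; norm_num at ht
    · exact h
  have hge := hmin (dl m t z') (by simpa using ht)
  rw [P_dl hP htp] at hge
  have hle : t * ‖z'‖ ≤ 1 := by
    rw [← le_div_iff₀' htp, pi_norm_le_iff_of_nonneg (by positivity)]
    intro j
    rw [le_div_iff₀' htp]
    have hj := norm_le_pi_norm (dl m t z') j
    simp only [ht] at hj
    refine le_trans ?_ hj
    simp only [dl, norm_mul, Complex.norm_real, Real.norm_eq_abs,
      abs_of_nonneg (Real.rpow_nonneg ht0 _)]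
    refine mul_le_mul_of_nonneg_right ?_ (norm_nonneg _)
    refine Real.self_le_rpow_of_le_one ht0 ht1 ?_
    have : (1:ℝ) ≤ m j := by exact_mod_cast hm j
    rw [div_le_one (by linarith)]; linarith
  have h3 : ‖z'‖ ≤ ν⁻¹ * P z' := by
    rw [inv_mul_eq_div, le_div_iff₀ hν]
    have : t * (‖z'‖ * ν) ≤ t * P z' := by nlinarith
    exact le_of_mul_le_mul_left this htp
  linarith

/-- projective map sending the model into a bounded set -/
def Gm (z : CSp N) : CSp N :=
  mkPt (fun j => initC z j * (1 + lastC z)⁻¹) (1 + lastC z)⁻¹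

/-- its inverse -/
def Hm (w : CSp N) : CSp N :=
  mkPt (fun j => initC w j * (lastC w)⁻¹) ((lastC w)⁻¹ - 1)

theorem Gm_Hm {w : CSp N} (hw : lastC w ≠ 0) : Gm (Hm w) = w := by
  refine CSp_ext ?_ ?_
  · funext j; simp [Gm, Hm, initC_mkPt, lastC_mkPt, hw]
  · simp [Gm, Hm, lastC_mkPt]

theorem Hm_Gm {z : CSp N} (hz : 1 + lastC z ≠ 0) : Hm (Gm z) = z := by
  refine CSp_ext ?_ ?_
  · funext j; simp [Gm, Hm, initC_mkPt, lastC_mkPt, hz]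
  · simp [Gm, Hm, lastC_mkPt]

/-- weighted dilation -/
def Dl (m : Fin N → ℕ) (t : ℝ) (z : CSp N) : CSp N := mkPt (dl m t (initC z)) (t * lastC z)

theorem Dl_Dl (m : Fin N → ℕ) {s t : ℝ} (hs : 0 < s) (ht : 0 < t) (h : s * t = 1) (z : CSp N) :
    Dl m s (Dl m t z) = z := by
  refine CSp_ext ?_ ?_
  · funext j
    simp only [Dl, initC_mkPt, dl]
    rw [← mul_assoc, ← Complex.ofReal_mul, ← Real.mul_rpow hs.le ht.le, h]; simp
  · simp only [Dl, lastC_mkPt]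
    rw [← mul_assoc, ← Complex.ofReal_mul, h]; simp

theorem Gm_bdd {P : (Fin N → ℂ) → ℝ} {μ : ℝ} (hμ : 0 < μ) (hc : ∀ z', ‖z'‖ ≤ 1 + μ * P z')
    (hnn : ∀ z', 0 ≤ P z') :
    ∃ B > 0, ∀ z ∈ EP P, ‖Gm z‖ ≤ B := by
  refine ⟨∑ _i : Fin (N+1), (1 + 2 * μ), by positivity, fun z hz => ?_⟩
  have hz' : P (initC z) < 2 * (lastC z).re := hz
  have hre : 0 < (lastC z).re := by linarith [hnn (initC z)]
  have hn : 1 + (lastC z).re ≤ ‖1 + lastC z‖ := by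
    simpa using Complex.re_le_norm (1 + lastC z)
  have hpos : 0 < ‖1 + lastC z‖ := by linarith
  have hcoord : ∀ i, ‖Gm z i‖ ≤ 1 + 2 * μ := by
    intro i
    refine Fin.lastCases ?_ (fun j => ?_) i
    · have : Gm z (Fin.last N) = (1 + lastC z)⁻¹ := lastC_mkPt _ _
      rw [this, norm_inv]
      have : ‖1 + lastC z‖⁻¹ ≤ 1 := inv_le_one_of_one_le₀ (by linarith)
      linarith
    · have : Gm z j.castSucc = initC z j * (1 + lastC z)⁻¹ := congrFun (initC_mkPt _ _) j
      rw [this, norm_mul, norm_inv, ← div_eq_mul_inv, div_le_iff₀ hpos]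
      have h1 := (norm_le_pi_norm (initC z) j).trans (hc (initC z))
      nlinarith
  have hsum : ‖Gm z‖ ≤ ∑ i, ‖Gm z i‖ := by
    rw [EuclideanSpace.norm_eq]
    refine Real.sqrt_le_iff.2 ⟨Finset.sum_nonneg fun i _ => norm_nonneg _, ?_⟩
    exact Finset.sum_sq_le_sq_sum_of_nonneg fun i _ => norm_nonneg _
  exact hsum.trans (Finset.sum_le_sum fun i _ => hcoord i)

theorem le_sqf {Ω : Set (CSp N)} {q : CSp N} {γ : ℝ} (hγ : 0 < γ) {F : CSp N → CSp N}
    (h1 : DifferentiableOn ℂ F Ω) (h2 : InjOn F Ω) (h3 : F '' Ω ⊆ ball 0 1) (h4 : F q = 0)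
    (h5 : ball 0 γ ⊆ F '' Ω) : γ ≤ sqf Ω q := by
  refine le_csSup ⟨1, ?_⟩ ⟨hγ, F, h1, h2, h3, h4, h5⟩
  rintro ρ ⟨-, g, -, -, hg, -, hb⟩
  by_contra hlt
  push Not at hlt
  have := hg (hb (show EuclideanSpace.single (0 : Fin (N+1)) (1:ℂ) ∈ ball 0 ρ by simpa using hlt))
  simp at this

/-- the rescaled copy of `D(r)` -/
def Dt (P : (Fin N → ℂ) → ℝ) (r t : ℝ) : Set (CSp N) :=
  {w | t * ‖lastC w‖ ^ 2 + P (initC w) < 2 * r * (lastC w).re}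

theorem mem_Dball_iff {P : (Fin N → ℂ) → ℝ} {r : ℝ} {z : CSp N} :
    z ∈ Dball P r ↔ ‖lastC z‖ ^ 2 + P (initC z) < 2 * r * (lastC z).re := by
  have : ‖lastC z - (r : ℂ)‖ ^ 2 = ‖lastC z‖ ^ 2 - 2 * r * (lastC z).re + r ^ 2 := by
    rw [← Complex.normSq_eq_norm_sq, ← Complex.normSq_eq_norm_sq, Complex.normSq_apply,
      Complex.normSq_apply]
    simp; ring
  unfold Dball
  rw [Set.mem_ofPred_eq, this]
  constructor <;> intro h <;> linarith

theorem Dl_mem_Dball {m : Fin N → ℕ} {P : (Fin N → ℂ) → ℝ} (hP : IsWHP m P) {r t : ℝ}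
    (ht : 0 < t) {w : CSp N} (hw : w ∈ Dt P r t) : Dl m t w ∈ Dball P r := by
  rw [mem_Dball_iff]
  have hw' : t * ‖lastC w‖ ^ 2 + P (initC w) < 2 * r * (lastC w).re := hw
  simp only [Dl, lastC_mkPt, initC_mkPt, P_dl hP ht, norm_mul, Complex.norm_real,
    Real.norm_eq_abs, abs_of_pos ht, Complex.re_ofReal_mul]
  nlinarith

theorem Dl_mem_EP {m : Fin N → ℕ} {P : (Fin N → ℂ) → ℝ} (hP : IsWHP m P) {t : ℝ}
    (ht : 0 < t) {w : CSp N} (hw : w ∈ EP P) : Dl m t w ∈ EP P := by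
  have hw' : P (initC w) < 2 * (lastC w).re := hw
  show P _ < 2 * _
  simp only [Dl, lastC_mkPt, initC_mkPt, P_dl hP ht, Complex.re_ofReal_mul]
  nlinarith

/-- Let `Ω` be a domain in `ℂⁿ` (`n ≥ 2`), `0 < r ≤ 1`, and `p ∈ ∂Ω` a `(P,r)`-extreme point,
witnessed by a map `f` holomorphic and injective on an open neighborhood `U` of `closure Ω`
with `f (closure Ω) ⊆ closure E_P`, `f(Ω) ⊆ E_P`, `f p = (0',0)` and `D(r) ⊆ f(Ω)`.
Then for every `0 < r' < r` and `c > 0` there are `ε₀ > 0` and `γ₀ > 0` with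
`σ_Ω(q) > γ₀` for all `q ∈ Γ(r',c) ∩ B(p;ε₀)`, where
`Γ(r',c) = f⁻¹(D(r') ∩ {|Im z_n| ≤ c |Re z_n|})`. -/
theorem stmt5 {N : ℕ} (hN : 1 ≤ N) (m : Fin N → ℕ) (hm : ∀ j, 0 < m j)
    (P : (Fin N → ℂ) → ℝ) (hP : IsWHP m P)
    (hPpos : ∀ z' : Fin N → ℂ, z' ≠ 0 → 0 < P z')
    (Ω : Set (CSp N)) (hΩo : IsOpen Ω) (hΩc : IsConnected Ω)
    (p : CSp N) (hp : p ∈ frontier Ω)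
    (r : ℝ) (hr0 : 0 < r) (hr1 : r ≤ 1)
    (f : CSp N → CSp N) (U : Set (CSp N)) (hUo : IsOpen U) (hΩU : closure Ω ⊆ U)
    (hfd : DifferentiableOn ℂ f U) (hfi : InjOn f U)
    (hfcl : f '' closure Ω ⊆ closure (EP P)) (hfΩ : f '' Ω ⊆ EP P)
    (hfp : f p = 0) (hfr : Dball P r ⊆ f '' Ω)
    (r' c : ℝ) (hr'0 : 0 < r') (hr'r : r' < r) (hc : 0 < c) :
    ∃ ε₀ > 0, ∃ γ₀ > 0,
      ∀ q ∈ closure Ω ∩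
          f ⁻¹' (Dball P r' ∩ {z : CSp N | |(lastC z).im| ≤ c * |(lastC z).re|}),
        q ∈ ball p ε₀ → γ₀ < sqf Ω q := by
  have hnn : ∀ z', 0 ≤ P z' := fun z' => by
    by_cases h : z' = 0
    · rw [h, P_zero hP]
    · exact (hPpos z' h).le
  have hPc := P_cont hP
  obtain ⟨μ, hμ, hco⟩ := P_coercive hm hP hPpos
  obtain ⟨B, hB, hGB⟩ := Gm_bdd hμ hco hnn
  -- on the model, the denominator does not vanish
  have hden : ∀ z ∈ EP P, 1 + lastC z ≠ 0 := by
    intro z hz h0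
    have hz' : P (initC z) < 2 * (lastC z).re := hz
    have := congrArg Complex.re h0
    simp at this
    linarith [hnn (initC z)]
  -- the compact set of normalized points
  set K : Set (CSp N) := {w | (lastC w).re = 1 ∧ |(lastC w).im| ≤ c ∧ P (initC w) ≤ 2 * r'}
    with hK
  have hKden : ∀ w ∈ K, 1 + lastC w ≠ 0 := by
    rintro w ⟨h1, -, -⟩ h0
    have := congrArg Complex.re h0
    rw [Complex.add_re, h1, Complex.one_re, Complex.zero_re] at this
    norm_num at this
  have hKcomp : IsCompact K := by
    refine Metric.isCompact_of_isClosed_isBounded ?_ ?_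
    · refine IsClosed.inter ?_ (IsClosed.inter ?_ ?_)
      · exact isClosed_eq (Complex.continuous_re.comp continuous_lastC) continuous_const
      · exact isClosed_le (continuous_abs.comp (Complex.continuous_im.comp continuous_lastC))
          continuous_const
      · exact isClosed_le (hPc.comp continuous_initC) continuous_const
    · refine isBounded_iff_forall_norm_le.2
        ⟨∑ _i : Fin (N+1), ((1 + c) + (1 + μ * (2 * r'))), ?_⟩
      rintro w ⟨h1, h2, h3⟩
      have hsum : ‖w‖ ≤ ∑ i, ‖w i‖ := by
        rw [EuclideanSpace.norm_eq]
        refine Real.sqrt_le_iff.2 ⟨Finset.sum_nonneg fun i _ => norm_nonneg _, ?_⟩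
        exact Finset.sum_sq_le_sq_sum_of_nonneg fun i _ => norm_nonneg _
      refine hsum.trans (Finset.sum_le_sum fun i _ => ?_)
      have hpos : 0 < μ * (2 * r') := by positivity
      refine Fin.lastCases ?_ (fun j => ?_) i
      · have h4 : ‖lastC w‖ ≤ _ := Complex.norm_le_abs_re_add_abs_im (lastC w)
        rw [h1, abs_one] at h4
        show ‖lastC w‖ ≤ _
        linarith
      · have h4 := (norm_le_pi_norm (initC w) j).trans (hco (initC w))
        have h5 : μ * P (initC w) ≤ μ * (2 * r') := mul_le_mul_of_nonneg_left h3 hμ.le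
        show ‖initC w j‖ ≤ _
        linarith
  obtain ⟨t0, ht0, ht0r⟩ : ∃ t0 > 0, t0 * (1 + c ^ 2) + 2 * r' < 2 * r := by
    refine ⟨(r - r') / (1 + c ^ 2), by have := sub_pos.2 hr'r; positivity, ?_⟩
    rw [div_mul_cancel₀ _ (by positivity)]
    linarith
  have hKD : K ⊆ Dt P r t0 := by
    rintro w ⟨h1, h2, h3⟩
    show t0 * ‖lastC w‖ ^ 2 + P (initC w) < 2 * r * (lastC w).re
    have h4 : ‖lastC w‖ ^ 2 ≤ 1 + c ^ 2 := by
      rw [← Complex.normSq_eq_norm_sq, Complex.normSq_apply, h1]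
      have := sq_le_sq' (by linarith [abs_le.1 h2]) (abs_le.1 h2).2
      nlinarith
    have := mul_le_mul_of_nonneg_left h4 ht0.le
    rw [h1]; linarith
  -- the open set of good images
  have hVo : IsOpen {w : CSp N | lastC w ≠ 0} := isOpen_ne_fun continuous_lastC continuous_const
  have hDo : IsOpen (Dt P r t0) := by
    refine isOpen_lt ?_ ?_
    · exact (continuous_const.mul (continuous_lastC.norm.pow 2)).add (hPc.comp continuous_initC)
    · exact continuous_const.mul (Complex.continuous_re.comp continuous_lastC)
  have hHc : ContinuousOn (Hm : CSp N → CSp N) {w | lastC w ≠ 0} := by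
    have hinv : ContinuousOn (fun w : CSp N => (lastC w)⁻¹) {w | lastC w ≠ 0} :=
      continuous_lastC.continuousOn.inv₀ fun w hw => hw
    refine continuousOn_mkPt (continuousOn_pi.2 fun j => ?_) (hinv.sub continuousOn_const)
    exact ((continuous_apply j).comp continuous_initC).continuousOn.mul hinv
  have hWo : IsOpen ({w : CSp N | lastC w ≠ 0} ∩ Hm ⁻¹' (Dt P r t0)) :=
    hHc.isOpen_inter_preimage hVo hDo
  have hGc : ContinuousOn (Gm : CSp N → CSp N) K := by
    have hinv : ContinuousOn (fun w : CSp N => (1 + lastC w)⁻¹) K :=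
      (continuous_const.add continuous_lastC).continuousOn.inv₀ hKden
    refine continuousOn_mkPt (continuousOn_pi.2 fun j => ?_) hinv
    exact ((continuous_apply j).comp continuous_initC).continuousOn.mul hinv
  have hGK : Gm '' K ⊆ {w : CSp N | lastC w ≠ 0} ∩ Hm ⁻¹' (Dt P r t0) := by
    rintro _ ⟨w, hw, rfl⟩
    refine ⟨?_, ?_⟩
    · show lastC (Gm w) ≠ 0
      rw [Gm, lastC_mkPt]
      exact inv_ne_zero (hKden w hw)
    · rw [Set.mem_preimage, Hm_Gm (hKden w hw)]
      exact hKD hw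
  obtain ⟨s, hs, hsub⟩ := (hKcomp.image_of_continuousOn hGc).exists_thickening_subset_open hWo hGK
  -- the neighbourhood of `p`
  have hpc : p ∈ closure Ω := frontier_subset_closure hp
  have hfcont : ContinuousAt f p :=
    (hfd.continuousOn).continuousAt (hUo.mem_nhds (hΩU hpc))
  have hlc : ContinuousAt (fun q => lastC (f q)) p := continuous_lastC.continuousAt.comp hfcont
  obtain ⟨ε, hε, hεb⟩ := Metric.continuousAt_iff.1 hlc t0 ht0
  set R : ℝ := 2 * B + 1 with hR
  have hRp : 0 < R := by positivity
  refine ⟨ε, hε, s / R / 2, by positivity, ?_⟩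
  rintro q ⟨hqc, hqD, hqim⟩ hqb
  have hqD1 : f q ∈ Dball P r' := hqD
  have hqim1 : |(lastC (f q)).im| ≤ c * |(lastC (f q)).re| := hqim
  have hD1 := mem_Dball_iff.1 hqD1
  set t : ℝ := (lastC (f q)).re with ht
  have htp : 0 < t := by
    have h1 := hnn (initC (f q))
    have h2 := sq_nonneg ‖lastC (f q)‖
    by_contra hle
    push Not at hle
    nlinarith
  have hqΩ : q ∈ Ω := by
    have : f q ∈ Dball P r := by rw [mem_Dball_iff]; nlinarith
    obtain ⟨x, hx, hxq⟩ := hfr this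
    have := hfi (hΩU (subset_closure hx)) (hΩU hqc) hxq
    rwa [← this]
  have htt0 : t < t0 := by
    have h1 := hεb hqb
    have h2 : lastC (f p) = 0 := by rw [hfp]; simp [lastC]
    simp only [h2, dist_zero_right] at h1
    exact (Complex.re_le_norm _).trans_lt h1
  have hti : 0 < t⁻¹ := inv_pos.2 htp
  have hηK : Dl m t⁻¹ (f q) ∈ K := by
    simp only [hK, Set.mem_ofPred_eq, Dl, lastC_mkPt, initC_mkPt, P_dl hP hti,
      Complex.re_ofReal_mul, Complex.im_ofReal_mul, abs_mul, abs_of_pos hti]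
    rw [abs_of_pos htp] at hqim1
    refine ⟨inv_mul_cancel₀ htp.ne', ?_, ?_⟩
    · rw [inv_mul_le_iff₀ htp]; linarith
    · rw [inv_mul_le_iff₀ htp]; nlinarith [sq_nonneg ‖lastC (f q)‖]
  set η := Dl m t⁻¹ (f q) with hη
  have hEP : ∀ x ∈ Ω, Dl m t⁻¹ (f x) ∈ EP P := fun x hx =>
    Dl_mem_EP hP hti (hfΩ (mem_image_of_mem f hx))
  have hηE : η ∈ EP P := hEP q hqΩ
  have hRc : (R : ℂ) ≠ 0 := by exact_mod_cast hRp.ne'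
  suffices h : s / R ≤ sqf Ω q by
    have : 0 < s / R := by positivity
    linarith
  have hfdΩ : DifferentiableOn ℂ f Ω := hfd.mono (subset_closure.trans hΩU)
  have hfco := differentiableOn_euclidean.1 hfdΩ
  refine le_sqf (F := fun x => (R : ℂ)⁻¹ • (Gm (Dl m t⁻¹ (f x)) - Gm η)) (by positivity)
    ?_ ?_ ?_ ?_ ?_
  · suffices hG : DifferentiableOn ℂ (fun x => Gm (Dl m t⁻¹ (f x))) Ω from
      (hG.sub_const (Gm η)).const_smul ((R : ℂ)⁻¹)
    have hinv : DifferentiableOn ℂ (fun x => (1 + lastC (Dl m t⁻¹ (f x)))⁻¹) Ω := by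
      refine DifferentiableOn.inv ?_ fun x hx => hden _ (hEP x hx)
      simp only [Dl, lastC_mkPt]
      exact (differentiableOn_const _).add ((differentiableOn_const _).mul (hfco (Fin.last N)))
    refine differentiableOn_mkPt (fun j => ?_) hinv
    refine DifferentiableOn.mul ?_ hinv
    simp only [Dl, initC_mkPt, dl]
    exact (differentiableOn_const _).mul (hfco j.castSucc)
  · intro x hx y hy hxy
    have h1 : Gm (Dl m t⁻¹ (f x)) = Gm (Dl m t⁻¹ (f y)) := by
      have := smul_right_injective (CSp N) (inv_ne_zero hRc) hxy
      exact sub_left_injective this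
    have h2 := congrArg Hm h1
    rw [Hm_Gm (hden _ (hEP x hx)), Hm_Gm (hden _ (hEP y hy))] at h2
    have h3 := congrArg (Dl m t) h2
    rw [Dl_Dl m htp hti (mul_inv_cancel₀ htp.ne'),
      Dl_Dl m htp hti (mul_inv_cancel₀ htp.ne')] at h3
    exact hfi (hΩU (subset_closure hx)) (hΩU (subset_closure hy)) h3
  · rintro _ ⟨x, hx, rfl⟩
    rw [mem_ball_zero_iff, norm_smul, norm_inv, Complex.norm_real, Real.norm_eq_abs,
      abs_of_pos hRp, inv_mul_lt_iff₀ hRp]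
    have h1 := norm_sub_le (Gm (Dl m t⁻¹ (f x))) (Gm η)
    have h2 := hGB _ (hEP x hx)
    have h3 := hGB _ hηE
    linarith
  · simp [hη]
  · intro v hv
    rw [mem_ball_zero_iff, lt_div_iff₀ hRp] at hv
    have hw : Gm η + (R : ℂ) • v ∈ Metric.thickening s (Gm '' K) := by
      rw [Metric.mem_thickening_iff]
      refine ⟨Gm η, mem_image_of_mem _ hηK, ?_⟩
      rw [dist_eq_norm, add_sub_cancel_left, norm_smul, Complex.norm_real, Real.norm_eq_abs,
        abs_of_pos hRp]
      linarith
    obtain ⟨hw0, hwD⟩ := hsub hw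
    have hwD' : Hm (Gm η + (R : ℂ) • v) ∈ Dt P r t := by
      have h1 : t0 * ‖lastC (Hm (Gm η + (R : ℂ) • v))‖ ^ 2 + P (initC (Hm (Gm η + (R : ℂ) • v)))
        < 2 * r * (lastC (Hm (Gm η + (R : ℂ) • v))).re := hwD
      have h2 := mul_le_mul_of_nonneg_right htt0.le
        (sq_nonneg ‖lastC (Hm (Gm η + (R : ℂ) • v))‖)
      show t * ‖lastC (Hm (Gm η + (R : ℂ) • v))‖ ^ 2 + P (initC (Hm (Gm η + (R : ℂ) • v)))
        < 2 * r * (lastC (Hm (Gm η + (R : ℂ) • v))).re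
      linarith
    obtain ⟨x, hx, hxe⟩ := hfr (Dl_mem_Dball hP htp hwD')
    refine ⟨x, hx, ?_⟩
    simp only [hxe]
    rw [Dl_Dl m hti htp (inv_mul_cancel₀ htp.ne'), Gm_Hm hw0, add_sub_cancel_left,
      smul_smul, inv_mul_cancel₀ hRc, one_smul]
end
end

section
/- The map ψ(z',z_n) := (2^{1/2m₁}(1+z_n)^{−1/m₁} z₁, …, 2^{1/2m_{n−1}}(1+z_n)^{−1/m_{n−1}} z_{n−1}, (1−z_n)/(1+z_n)), with principal-branch complex powers, is a biholomorphism from D_P onto E_P: it is holomorphic and injective on D_P, maps D_P onto E_P, and its inverse is holomorphic on E_P. -/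
open Complex Metric Set

noncomputable section

variable {N : ℕ}

/-- The general ellipsoid `D_P = {(z',z_n) : |z_n|² + P(z') < 1}`. -/
def DP (P : (Fin N → ℂ) → ℝ) : Set (CSp N) :=
  {z | ‖lastC z‖ ^ 2 + P (initC z) < 1}

/-- The map `ψ(z', z_n) = (2^{1/2m₁}(1+z_n)^{-1/m₁} z₁, …, (1-z_n)/(1+z_n))`,
with principal-branch complex powers. -/
def psiMap (m : Fin N → ℕ) (z : CSp N) : CSp N :=
  mkPt (fun j => (2 : ℂ) ^ (1 / (2 * (m j : ℂ))) * (1 + lastC z) ^ (-(1 / (m j : ℂ))) * initC z j)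
       ((1 - lastC z) / (1 + lastC z))


lemma exp_prod_aux {N : ℕ} (m : Fin N → ℕ) (K : Fin N → ℕ) (l : ℂ)
    (hK : wt m K = 1 / 2) : ∏ j, (Complex.exp (l / (m j : ℂ))) ^ K j = Complex.exp l := by
  have h2 : (∑ j, (K j : ℂ) / (2 * (m j : ℂ))) = 1 / 2 := by
    have := congrArg (fun x : ℝ => (x : ℂ)) hK
    simpa [wt] using this
  simp_rw [← Complex.exp_nat_mul]
  rw [← Complex.exp_sum]
  congr 1
  have h3 : ∀ j, (K j : ℂ) * (l / (m j : ℂ)) = (2 * l) * ((K j : ℂ) / (2 * (m j : ℂ))) := by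
    intro j
    by_cases h : (m j : ℂ) = 0
    · simp [h]
    · field_simp
  simp_rw [h3]
  rw [← Finset.mul_sum, h2]
  ring

lemma P_homog {N : ℕ} (m : Fin N → ℕ) (P : (Fin N → ℂ) → ℝ) (hP : IsWHP m P) (l : ℂ)
    (z : Fin N → ℂ) :
    P (fun j => Complex.exp (l / (m j : ℂ)) * z j) = ‖Complex.exp l‖ ^ 2 * P z := by
  obtain ⟨a, -, -, hw, hs⟩ := hP
  have key : (P (fun j => Complex.exp (l / (m j : ℂ)) * z j) : ℂ)
      = (Complex.exp l * starRingEnd ℂ (Complex.exp l)) * (P z : ℂ) := by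
    rw [hs, hs, ← smul_eq_mul, smul_finsum]
    refine finsum_congr fun K => ?_
    rw [smul_finsum]
    refine finsum_congr fun L => ?_
    by_cases h : a K L = 0
    · simp [h]
    · obtain ⟨hK, hL⟩ := hw K L h
      have e1 := exp_prod_aux m K l hK
      have e2 := congrArg (starRingEnd ℂ) (exp_prod_aux m L l hL)
      rw [map_prod] at e2
      simp only [map_pow] at e2
      simp only [map_mul, mul_pow, Finset.prod_mul_distrib, e1, e2, smul_eq_mul]
      ring
  rw [Complex.mul_conj, Complex.normSq_eq_norm_sq] at key
  exact_mod_cast key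

lemma P_nonneg_aux {N : ℕ} (m : Fin N → ℕ) (P : (Fin N → ℂ) → ℝ) (hP : IsWHP m P)
    (hPpos : ∀ z' : Fin N → ℂ, z' ≠ 0 → 0 < P z') (z : Fin N → ℂ) : 0 ≤ P z := by
  by_cases h : z = 0
  · subst h
    have := P_homog m P hP (Real.log 2 : ℝ) 0
    rw [← Complex.ofReal_exp, Real.exp_log (by norm_num)] at this
    have e : (fun j => Complex.exp (((Real.log 2 : ℝ) : ℂ) / (m j : ℂ)) * (0 : Fin N → ℂ) j) = 0 := by
      ext j; simp
    rw [e] at this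
    norm_num at this
    linarith
  · exact (hPpos z h).le

lemma lastC_psi {N : ℕ} (m : Fin N → ℕ) (z : CSp N) :
    lastC (psiMap m z) = (1 - lastC z) / (1 + lastC z) := by
  simp [lastC, psiMap, mkPt]

lemma initC_psi {N : ℕ} (m : Fin N → ℕ) (z : CSp N) (j : Fin N) :
    initC (psiMap m z) j =
      (2 : ℂ) ^ (1 / (2 * (m j : ℂ))) * (1 + lastC z) ^ (-(1 / (m j : ℂ))) * initC z j := by
  simp [initC, psiMap, mkPt]

lemma ext_aux {N : ℕ} (z w : CSp N) (h : lastC z = lastC w) (h' : ∀ j, initC z j = initC w j) :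
    z = w := by
  ext i
  refine Fin.lastCases ?_ (fun j => ?_) i
  · exact h
  · exact h' j

lemma coef_aux (k : ℕ) (u : ℂ) (hu : u ≠ 0) :
    (2 : ℂ) ^ (1 / (2 * (k : ℂ))) * u ^ (-(1 / (k : ℂ)))
      = Complex.exp ((Complex.log 2 / 2 - Complex.log u) / (k : ℂ)) := by
  rw [Complex.cpow_def_of_ne_zero two_ne_zero, Complex.cpow_def_of_ne_zero hu, ← Complex.exp_add]
  congr 1
  by_cases h : (k : ℂ) = 0
  · simp [h]
  · field_simp
    ring

lemma ne_aux {z : ℂ} (h : 0 < (1 + z).re) : 1 + z ≠ 0 := by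
  intro h0
  rw [h0] at h
  simp at h

lemma log_aux {u : ℂ} (hu : 0 < u.re) : Complex.log (2 / u) = Complex.log 2 - Complex.log u := by
  have hne : u ≠ 0 := by rintro rfl; simp at hu
  have harg : u.arg ≠ Real.pi := by
    intro h
    rw [Complex.arg_eq_pi_iff] at h
    linarith [h.1]
  rw [div_eq_mul_inv]
  have := Complex.log_ofReal_mul (r := 2) (by norm_num) (inv_ne_zero hne)
  rw [Complex.log_inv _ harg] at this
  rw [Complex.ofReal_log (by norm_num)] at this
  push_cast at this
  rw [this]
  ring

lemma psi_psi {N : ℕ} (m : Fin N → ℕ) (z : CSp N) (h : 0 < (1 + lastC z).re) :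
    psiMap m (psiMap m z) = z := by
  have hne := ne_aux h
  have h2 : 1 + (1 - lastC z) / (1 + lastC z) = 2 / (1 + lastC z) := by
    field_simp; ring
  apply ext_aux
  · rw [lastC_psi, lastC_psi, h2]
    field_simp
    ring
  · intro j
    rw [initC_psi, initC_psi, lastC_psi, h2, coef_aux _ _ hne,
      coef_aux _ _ (div_ne_zero two_ne_zero hne), log_aux h, ← mul_assoc, ← Complex.exp_add]
    have : (Complex.log 2 / 2 - (Complex.log 2 - Complex.log (1 + lastC z))) / (m j : ℂ)
      + (Complex.log 2 / 2 - Complex.log (1 + lastC z)) / (m j : ℂ) = 0 := by ring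
    rw [this]
    simp

lemma P_psi {N : ℕ} (m : Fin N → ℕ) (P : (Fin N → ℂ) → ℝ) (hP : IsWHP m P) (z : CSp N)
    (h : 0 < (1 + lastC z).re) :
    P (initC (psiMap m z)) = 2 / ‖1 + lastC z‖ ^ 2 * P (initC z) := by
  have hne := ne_aux h
  have e : initC (psiMap m z) = fun j =>
      Complex.exp ((Complex.log 2 / 2 - Complex.log (1 + lastC z)) / (m j : ℂ)) * initC z j := by
    ext j
    rw [initC_psi, coef_aux _ _ hne]
  rw [e, P_homog m P hP, Complex.exp_sub, Complex.exp_log hne, norm_div, div_pow]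
  congr 2
  rw [← norm_pow, ← Complex.exp_nat_mul]
  have : ((2 : ℕ) : ℂ) * (Complex.log 2 / 2) = Complex.log 2 := by push_cast; ring
  rw [this, Complex.exp_log two_ne_zero]
  simp

lemma re_aux (z : ℂ) : ((1 - z) / (1 + z)).re = (1 - ‖z‖ ^ 2) / ‖1 + z‖ ^ 2 := by
  rw [← Complex.normSq_eq_norm_sq, ← Complex.normSq_eq_norm_sq, Complex.div_re, ← add_div]
  congr 1
  simp [Complex.normSq_apply]
  ring

lemma norm_aux (z : ℂ) (h : 1 + z ≠ 0) :
    1 - ‖(1 - z) / (1 + z)‖ ^ 2 = 4 * z.re / ‖1 + z‖ ^ 2 := by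
  have hp : ‖1 + z‖ ^ 2 ≠ 0 := by simpa using h
  rw [norm_div, div_pow, eq_div_iff hp, sub_mul, div_mul_cancel₀ _ hp,
    ← Complex.normSq_eq_norm_sq, ← Complex.normSq_eq_norm_sq]
  simp [Complex.normSq_apply]
  ring

lemma diff_psi {N : ℕ} (m : Fin N → ℕ) (z : CSp N) (h : 0 < (1 + lastC z).re) :
    DifferentiableAt ℂ (psiMap m) z := by
  have hne := ne_aux h
  have hd : ∀ i : Fin (N + 1), DifferentiableAt ℂ (fun z : CSp N => z i) z := fun i => by fun_prop
  have hl : DifferentiableAt ℂ (fun z : CSp N => 1 + lastC z) z := (hd _).const_add 1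
  rw [differentiableAt_euclidean]
  intro i
  refine Fin.lastCases ?_ (fun j => ?_) i
  · have : (fun x : CSp N => (psiMap m x) (Fin.last N)) =
        fun x => (1 - lastC x) / (1 + lastC x) := by
      ext x; exact lastC_psi m x
    rw [this]
    have hs : DifferentiableAt ℂ (fun z : CSp N => 1 - lastC z) z := (hd _).const_sub 1
    simp only [div_eq_mul_inv]
    exact hs.mul (hl.inv hne)
  · have : (fun x : CSp N => (psiMap m x) j.castSucc) = fun x =>
        (2 : ℂ) ^ (1 / (2 * (m j : ℂ))) * (1 + lastC x) ^ (-(1 / (m j : ℂ))) * initC x j := by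
      ext x; exact initC_psi m x j
    rw [this]
    exact ((hl.cpow_const (Or.inl h)).const_mul _).mul (hd _)

/-- The map `ψ` is a biholomorphism from `D_P` onto `E_P`: it is holomorphic and injective
on `D_P`, maps `D_P` onto `E_P`, and its inverse is holomorphic on `E_P`. -/
theorem stmt6 {N : ℕ} (hN : 1 ≤ N) (m : Fin N → ℕ) (hm : ∀ j, 0 < m j)
    (P : (Fin N → ℂ) → ℝ) (hP : IsWHP m P)
    (hPpos : ∀ z' : Fin N → ℂ, z' ≠ 0 → 0 < P z') :
    DifferentiableOn ℂ (psiMap m) (DP P) ∧ InjOn (psiMap m) (DP P) ∧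
    psiMap m '' DP P = EP P ∧
    ∃ g : CSp N → CSp N, DifferentiableOn ℂ g (EP P) ∧
      (∀ z ∈ DP P, g (psiMap m z) = z) ∧ ∀ w ∈ EP P, psiMap m (g w) = w := by
  have hnn := P_nonneg_aux m P hP hPpos
  have hD : ∀ z ∈ DP P, 0 < (1 + lastC z).re := by
    intro z hz
    have h1 : ‖lastC z‖ ^ 2 + P (initC z) < 1 := hz
    have h2 := hnn (initC z)
    have h3 : ‖lastC z‖ < 1 := by
      by_contra hc
      push Not at hc
      nlinarith
    have h4 := (abs_le.1 (Complex.abs_re_le_norm (lastC z))).1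
    simp
    linarith
  have hE : ∀ z ∈ EP P, 0 < (1 + lastC z).re := by
    intro z hz
    have h1 : P (initC z) < 2 * (lastC z).re := hz
    have h2 := hnn (initC z)
    simp
    linarith
  have mapDE : ∀ z ∈ DP P, psiMap m z ∈ EP P := by
    intro z hz
    have h := hD z hz
    have hp : 0 < ‖1 + lastC z‖ ^ 2 := pow_pos (norm_pos_iff.2 (ne_aux h)) 2
    have h1 : ‖lastC z‖ ^ 2 + P (initC z) < 1 := hz
    show P (initC (psiMap m z)) < 2 * (lastC (psiMap m z)).re
    rw [P_psi m P hP z h, lastC_psi, re_aux, div_mul_eq_mul_div, ← mul_div_assoc]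
    gcongr
    linarith
  have mapED : ∀ z ∈ EP P, psiMap m z ∈ DP P := by
    intro z hz
    have h := hE z hz
    have hp : 0 < ‖1 + lastC z‖ ^ 2 := pow_pos (norm_pos_iff.2 (ne_aux h)) 2
    have h1 : P (initC z) < 2 * (lastC z).re := hz
    show ‖lastC (psiMap m z)‖ ^ 2 + P (initC (psiMap m z)) < 1
    have h5 := norm_aux (lastC z) (ne_aux h)
    have h6 : 2 / ‖1 + lastC z‖ ^ 2 * P (initC z) < 4 * (lastC z).re / ‖1 + lastC z‖ ^ 2 := by
      rw [div_mul_eq_mul_div]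
      gcongr ?_ / _
      linarith
    rw [P_psi m P hP z h, lastC_psi]
    linarith
  have inv1 : ∀ z ∈ DP P, psiMap m (psiMap m z) = z := fun z hz => psi_psi m z (hD z hz)
  have inv2 : ∀ z ∈ EP P, psiMap m (psiMap m z) = z := fun z hz => psi_psi m z (hE z hz)
  refine ⟨fun z hz => (diff_psi m z (hD z hz)).differentiableWithinAt, ?_, ?_,
    psiMap m, fun z hz => (diff_psi m z (hE z hz)).differentiableWithinAt, inv1, inv2⟩
  · intro x hx y hy hxy
    rw [← inv1 x hx, ← inv1 y hy, hxy]
  · ext w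
    constructor
    · rintro ⟨z, hz, rfl⟩
      exact mapDE z hz
    · intro hw
      exact ⟨psiMap m w, mapED w hw, inv2 w hw⟩
end
end
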